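/- arXiv:cs/0701113 — 2 statements merged into one kernel-verified Lean document; each statement's English description precedes it below -/
import Mathlib

section
/- For every finite linear ordering α, every finite semigroup (S,·), and every additive labelling σ from α to S, there exists a ramseyan split for (α,σ) of height at most |S|. -/
/-- An additive labelling from a linear ordering to a semigroup. -/
def IsAdditive {α S : Type*} [LinearOrder α] [Semigroup S] (σ : α → α → S) : Prop :=
  ∀ x y z : α, x < y → y < z → σ x y * σ y z = σ x z

/-- `x` and `y` are `k`-neighbours for the split `s`. -/
def KNeighbours {α : Type*} [LinearOrder α] (s : α → ℕ) (k : ℕ) (x y : α) : Prop :=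
  s x = k ∧ s y = k ∧ ∀ z, min x y ≤ z → z ≤ max x y → k ≤ s z

/-- A split `s` is ramseyan for the additive labelling `σ`. -/
def IsRamseyanSplit {α S : Type*} [LinearOrder α] [Semigroup S]
    (σ : α → α → S) (s : α → ℕ) : Prop :=
  ∀ k : ℕ, ∀ x y x' y' : α, x < y → x' < y' →
    (∀ a ∈ ({x, y, x', y'} : Set α), ∀ b ∈ ({x, y, x', y'} : Set α), KNeighbours s k a b) →
    σ x y = σ x' y' ∧ σ x y * σ x y = σ x y


/-!
Extend the ordering by a new least element `⊥` and the labelling by suitable labels `σ ⊥ x`, and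
let `S` act on itself inside the finite monoid `S¹`. Peel off one `𝓙`-class at a time: suppose that
a set `C ∋ ⊥` of cut points is such that every label which does not run across a cut point lies in
`U`, and let `J` be a minimal `𝓙`-class of `U`. Going through the ordering from left to right, turn
`z` into a new cut point exactly when the label to `z` from each cut point visible from `z` is in
`J`. Since `J` is minimal, afterwards every label not running across a cut point lies in `U \ J`.

It remains to spread the new cut points over `|J|` levels. To a new cut point `y` belong the label
`τ y ∈ J` from the last old cut point to `y` and the common `𝓡`-class `R` of the labels from `y` to
later new cut points. Within a piece, all `τ y` are in the same `𝓡`-class, and Green's lemma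
encodes the pair `(τ y, R)` injectively as an element of `R ⊆ J`, which is the level of `y`. If
`x < y` are on the same level then `τ x * σ x y = τ y = τ x`, and this equation together with the
`𝓡`-class of `σ x y` determines `σ x y` and makes it idempotent.
-/

open Set

section Green

variable {M : Type*} [Monoid M] {a b c d p t : M}

/-- The `𝓙`-preorder of a monoid: `a` lies in the two-sided ideal generated by `b`. -/
def JLE (a b : M) : Prop :=
  ∃ p q, p * b * q = a

/-- The class of `a` for Green's relation `𝓙`. -/
def jClass (a : M) : Set M :=
  {b | JLE a b ∧ JLE b a}

/-- The class of `a` for Green's relation `𝓡`: the elements generating the same right ideal as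
`a`. In a noncommutative monoid, `a ∣ b` means that `b` is in the right ideal generated by `a`. -/
def rClass (a : M) : Set M :=
  {b | a ∣ b ∧ b ∣ a}

lemma JLE.refl (a : M) : JLE a a :=
  ⟨1, 1, by simp⟩

lemma JLE.trans (hab : JLE a b) (hbc : JLE b c) : JLE a c := by
  obtain ⟨p, q, rfl⟩ := hab
  obtain ⟨p', q', rfl⟩ := hbc
  exact ⟨p * p', q' * q, by simp only [mul_assoc]⟩

lemma mul_jLE_left (a b : M) : JLE (a * b) a :=
  ⟨1, b, by simp⟩

lemma mul_jLE_right (a b : M) : JLE (a * b) b :=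
  ⟨a, 1, by simp⟩

lemma jLE_of_dvd (h : a ∣ b) : JLE b a := by
  obtain ⟨c, rfl⟩ := h
  exact mul_jLE_left a c

lemma JLE.op (h : JLE a b) : JLE (MulOpposite.op a) (MulOpposite.op b) := by
  obtain ⟨p, q, rfl⟩ := h
  exact ⟨MulOpposite.op q, MulOpposite.op p, by simp [mul_assoc]⟩

lemma self_mem_jClass (a : M) : a ∈ jClass a :=
  ⟨.refl a, .refl a⟩

lemma jLE_of_mem_jClass (hb : b ∈ jClass a) (hc : c ∈ jClass a) : JLE b c :=
  hb.2.trans hc.1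

lemma mem_jClass_trans (hb : b ∈ jClass a) (hc : c ∈ jClass b) : c ∈ jClass a :=
  ⟨hb.1.trans hc.1, hc.2.trans hb.2⟩

lemma rClass_subset_jClass (a : M) : rClass a ⊆ jClass a :=
  fun _ hb => ⟨jLE_of_dvd hb.2, jLE_of_dvd hb.1⟩

lemma self_mem_rClass (a : M) : a ∈ rClass a :=
  ⟨dvd_rfl, dvd_rfl⟩

lemma rClass_eq_of_mem (h : b ∈ rClass a) : rClass b = rClass a := by
  ext c
  exact ⟨fun hc => ⟨h.1.trans hc.1, hc.2.trans h.2⟩, fun hc => ⟨h.2.trans hc.1, hc.2.trans h.1⟩⟩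

variable [Finite M]

lemma exists_minimal_jClass {U : Set M} (hU : U.Nonempty) :
    ∃ a ∈ U, ∀ b ∈ U, JLE b a → b ∈ jClass a := by
  obtain ⟨a, haU, hmin⟩ := U.toFinite.exists_minimalFor (fun a => {x | JLE x a}) U hU
  exact ⟨a, haU, fun b hb hba => ⟨hmin hb (fun _ hx => hx.trans hba) (JLE.refl a), hba⟩⟩

lemma JLE.dvd_of_dvd (hJ : JLE a b) (hab : a ∣ b) : b ∣ a := by
  obtain ⟨p, q, hpq⟩ := hJ
  have hsub : {x | b ∣ x} ⊆ {x | a ∣ x} := fun x hx => hab.trans hx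
  -- The right ideal of `a = p * b * q` is covered by the left translate by `p` of that of `b`.
  have hcover : {x | a ∣ x} ⊆ (p * ·) '' {x | b ∣ x} := by
    rintro _ ⟨c, rfl⟩
    exact ⟨b * (q * c), dvd_mul_right b _, by simp only [← hpq, mul_assoc]⟩
  have hcard : {x | a ∣ x}.ncard ≤ {x | b ∣ x}.ncard :=
    (ncard_le_ncard hcover).trans (ncard_image_le (toFinite _))
  have heq : {x | b ∣ x} = {x | a ∣ x} := eq_of_subset_of_ncard_le hsub hcard
  exact heq.symm.subset (dvd_refl a)

lemma JLE.exists_mul_mul_eq (h : JLE a (p * a)) : ∃ v, v * (p * a) = a := by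
  have : Finite Mᵐᵒᵖ := .of_equiv M MulOpposite.opEquiv
  obtain ⟨v, hv⟩ := h.op.dvd_of_dvd ⟨MulOpposite.op p, MulOpposite.op_mul p a⟩
  exact ⟨v.unop, by simpa using congr_arg MulOpposite.unop hv.symm⟩

lemma mem_rClass_of_dvd (hb : b ∈ jClass a) (hc : c ∈ jClass a) (h : b ∣ c) : c ∈ rClass b :=
  ⟨h, (jLE_of_mem_jClass hb hc).dvd_of_dvd h⟩

/-- Green's lemma: for `d = p * a * q`, left translation by `p` is the required injection. -/
lemma exists_mapsTo_rClass_injOn (h : d ∈ jClass a) :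
    ∃ p : M, MapsTo (p * ·) (rClass a) (rClass d) ∧ InjOn (p * ·) (rClass a) := by
  obtain ⟨had, p, q, hpq⟩ := h
  have hpad : p * a ∣ d := ⟨q, hpq.symm⟩
  have hpa : JLE (p * a) d := (mul_jLE_right p a).trans had
  obtain ⟨v, hv⟩ := (had.trans (jLE_of_dvd hpad)).exists_mul_mul_eq
  have hinv : LeftInvOn (v * ·) (p * ·) (rClass a) := by
    rintro _ ⟨⟨u, rfl⟩, -⟩
    simp only [← mul_assoc] at hv ⊢
    rw [hv]
  refine ⟨p, fun x hx => ?_, hinv.injOn⟩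
  exact ⟨(hpa.dvd_of_dvd hpad).trans (mul_dvd_mul_left p hx.1),
    (mul_dvd_mul_left p hx.2).trans hpad⟩

/-- The pair of `t`, taken from a fixed `𝓡`-class, and `rClass d` is encoded by carrying `t` into
`rClass d` with Green's lemma. -/
lemma exists_rClass_encoding (a : M) :
    ∃ g : M → M → M, (∀ t ∈ jClass a, ∀ d ∈ jClass a, g t d ∈ rClass d) ∧
      ∀ t ∈ jClass a, ∀ d ∈ jClass a, ∀ t' ∈ rClass t, ∀ d' ∈ jClass a,
        g t d = g t' d' → t = t' ∧ rClass d = rClass d' := by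
  have green (A B : Set M) (h : ∃ t ∈ jClass a, ∃ d ∈ jClass a, A = rClass t ∧ B = rClass d) :
      ∃ p : M, MapsTo (p * ·) A B ∧ InjOn (p * ·) A := by
    obtain ⟨t, ht, d, hd, rfl, rfl⟩ := h
    exact exists_mapsTo_rClass_injOn ⟨jLE_of_mem_jClass ht hd, jLE_of_mem_jClass hd ht⟩
  choose! p hmaps hinj using green
  have hmem : ∀ t ∈ jClass a, ∀ d ∈ jClass a, p (rClass t) (rClass d) * t ∈ rClass d :=
    fun t ht d hd => hmaps _ _ ⟨t, ht, d, hd, rfl, rfl⟩ (self_mem_rClass t)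
  refine ⟨fun t d => p (rClass t) (rClass d) * t, hmem, ?_⟩
  intro t ht d hd t' ht' d' hd' (heq : p (rClass t) (rClass d) * t = p (rClass t') (rClass d') * t')
  have ht'J : t' ∈ jClass a := mem_jClass_trans ht (rClass_subset_jClass t ht')
  have hdd' : rClass d = rClass d' := by
    rw [← rClass_eq_of_mem (hmem t ht d hd), ← rClass_eq_of_mem (hmem t' ht'J d' hd'), heq]
  rw [rClass_eq_of_mem ht', ← hdd'] at heq
  exact ⟨hinj _ _ ⟨t, ht, d, hd, rfl, rfl⟩ (self_mem_rClass t) ht' heq, hdd'⟩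

lemma JLE.mul_eq_left (hJ : JLE b t) (hb : t * b = t) (hc : t * c = t) : b * c = b := by
  obtain ⟨w, hw⟩ : ∃ w, w * (t * b) = b := by
    rw [← hb] at hJ
    exact hJ.exists_mul_mul_eq
  rw [hb] at hw
  calc b * c = w * (t * c) := by rw [← mul_assoc, hw]
    _ = b := by rw [hc, hw]

lemma JLE.eq_of_dvd (hJ : JLE b t) (hb : t * b = t) (hc : t * c = t) (hbc : b ∣ c) : b = c := by
  obtain ⟨u, rfl⟩ := hbc
  calc b = b * (b * u) := (hJ.mul_eq_left hb hc).symm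
    _ = b * u := by rw [← mul_assoc, hJ.mul_eq_left hb hb]

end Green

section Homogeneous

variable {α S : Type*} [LinearOrder α]

/-- `σ` is constant on the pairs `x < y` of `L`, with idempotent value. -/
def IsHomogeneous [Mul S] (σ : α → α → S) (L : Set α) : Prop :=
  ∀ ⦃x⦄, x ∈ L → ∀ ⦃y⦄, y ∈ L → ∀ ⦃x'⦄, x' ∈ L → ∀ ⦃y'⦄, y' ∈ L → x < y → x' < y' →
    σ x y = σ x' y' ∧ IsIdempotentElem (σ x y)

/-- The split `s` is ramseyan away from the cut points in `C`: on every convex set `I` which avoids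
`C` and on which `s ≥ k`, the points of level `k` are homogeneous. -/
def IsRamseyanOff [Mul S] (σ : α → α → S) (C : Set α) (s : α → ℕ) : Prop :=
  ∀ k, ∀ I : Set α, I.OrdConnected → Disjoint I C → (∀ z ∈ I, k ≤ s z) →
    IsHomogeneous σ {x ∈ I | s x = k}

lemma IsHomogeneous.mono [Mul S] {σ : α → α → S} {L L' : Set α} (h : IsHomogeneous σ L)
    (hL : L' ⊆ L) : IsHomogeneous σ L' :=
  fun _ hx _ hy _ hx' _ hy' => h (hL hx) (hL hy) (hL hx') (hL hy')

lemma IsRamseyanOff.piecewise [Mul S] {σ : α → α → S} {C Y : Set α} {e s : α → ℕ} {n : ℕ}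
    [DecidablePred (· ∈ Y)]
    (he : ∀ y ∈ Y, e y ≤ n)
    (hhom : ∀ k, ∀ I : Set α, I.OrdConnected → Disjoint I C → IsHomogeneous σ {x ∈ I ∩ Y | e x = k})
    (hs : ∀ x ∉ C ∪ Y, 1 ≤ s x) (hram : IsRamseyanOff σ (C ∪ Y) s) :
    IsRamseyanOff σ C (Y.piecewise e fun x => n + s x) := by
  intro k I hI hIC hk
  have hlow {x} (hx : x ∈ Y) : Y.piecewise e (fun x => n + s x) x = e x :=
    piecewise_eq_of_mem _ _ _ hx
  have hhigh {x} (hx : x ∉ Y) : Y.piecewise e (fun x => n + s x) x = n + s x :=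
    piecewise_eq_of_notMem _ _ _ hx
  rcases le_or_gt k n with hkn | hkn
  · refine (hhom k I hI hIC).mono ?_
    rintro x ⟨hxI, hx⟩
    have hxY : x ∈ Y := by
      by_contra hxY
      have hpos := hs x (by simp [hxY, disjoint_left.1 hIC hxI])
      rw [hhigh hxY] at hx
      omega
    exact ⟨⟨hxI, hxY⟩, hlow hxY ▸ hx⟩
  · have hIY : Disjoint I Y := disjoint_left.2 fun x hxI hxY => by
      have := hk x hxI
      rw [hlow hxY] at this
      exact absurd (he x hxY) (by omega)
    have hshift {x} (hxI : x ∈ I) := hhigh (disjoint_left.1 hIY hxI)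
    refine (hram (k - n) I hI (disjoint_union_right.2 ⟨hIC, hIY⟩) fun x hxI => ?_).mono ?_
    · have := hk x hxI
      rw [hshift hxI] at this
      omega
    · rintro x ⟨hxI, hx⟩
      rw [hshift hxI] at hx
      exact ⟨hxI, by omega⟩

end Homogeneous

section CutSet

lemma exists_set_forall_mem_iff {α : Type*} [LT α] [WellFoundedLT α] (P : α → Set α → Prop) :
    ∃ Y : Set α, ∀ z, z ∈ Y ↔ P z {y ∈ Y | y < z} := by
  let F (z : α) (earlier : ∀ y, y < z → Prop) : Prop := P z {y | ∃ h : y < z, earlier y h}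
  refine ⟨{z | wellFounded_lt.fix F z}, fun z => ?_⟩
  rw [mem_ofPred_eq, wellFounded_lt.fix_eq]
  simp only [F, mem_ofPred_eq, exists_prop, and_comm]

variable {α M : Type*} [LinearOrder α] {σ : α → α → M} {C Y : Set α} {U J : Set M} {x y z m m' : α}

/-- `C` cuts the ordering into pieces on which the labels are in `U`. A piece consists of a cut
point `m` and the points following `m` up to, but not including, the next cut point; it is convex,
and two points `x < y` are in the same piece when `Ioc x y` avoids `C`. -/
structure IsCutSet (σ : α → α → M) (C : Set α) (U : Set M) : Prop where
  label_mem : ∀ ⦃x y⦄, x < y → Disjoint (Ioc x y) C → σ x y ∈ U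
  exists_cut : ∀ z, z ∉ C → ∃ m ∈ C, m < z ∧ Disjoint (Ioc m z) C

/-- `Y` is the set of new cut points chosen from left to right: a point `z` is chosen when the
labels to `z` from the old cut point of its piece and from the earlier chosen points of its piece
are all in `J`. -/
def IsGreedyCut (σ : α → α → M) (C : Set α) (J : Set M) (Y : Set α) : Prop :=
  ∀ z, z ∈ Y ↔ z ∉ C ∧ ∀ y ∈ C ∪ Y, y < z → Disjoint (Ioc y z) C → σ y z ∈ J

lemma exists_isGreedyCut [WellFoundedLT α] (σ : α → α → M) (C : Set α) (J : Set M) :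
    ∃ Y, IsGreedyCut σ C J Y := by
  obtain ⟨Y, hY⟩ := exists_set_forall_mem_iff fun z earlier =>
    z ∉ C ∧ ∀ y ∈ C ∪ earlier, y < z → Disjoint (Ioc y z) C → σ y z ∈ J
  refine ⟨Y, fun z => (hY z).trans (and_congr_right fun _ => forall_congr' fun y => ?_)⟩
  simp only [mem_union, mem_ofPred_eq]
  tauto

lemma IsGreedyCut.notMem (hY : IsGreedyCut σ C J Y) (hy : y ∈ Y) : y ∉ C :=
  ((hY y).1 hy).1

lemma IsGreedyCut.label_mem (hY : IsGreedyCut σ C J Y) (hx : x ∈ C ∪ Y) (hy : y ∈ Y) (hxy : x < y)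
    (hC : Disjoint (Ioc x y) C) : σ x y ∈ J :=
  ((hY y).1 hy).2 x hx hxy hC

lemma IsGreedyCut.exists_label_notMem (hY : IsGreedyCut σ C J Y) (hz : z ∉ C ∪ Y) :
    ∃ y ∈ C ∪ Y, y < z ∧ Disjoint (Ioc y z) C ∧ σ y z ∉ J := by
  rw [mem_union, not_or, hY z] at hz
  by_contra! h
  exact hz.2 ⟨hz.1, h⟩

lemma eq_of_disjoint_Ioc (hm : m ∈ C) (hm' : m' ∈ C) (hmz : m < z) (hm'z : m' < z)
    (hd : Disjoint (Ioc m z) C) (hd' : Disjoint (Ioc m' z) C) : m = m' :=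
  le_antisymm (not_lt.1 fun h => disjoint_left.1 hd' ⟨h, hmz.le⟩ hm)
    (not_lt.1 fun h => disjoint_left.1 hd ⟨h, hm'z.le⟩ hm')

lemma IsCutSet.mem_of_empty (hC : IsCutSet σ C ∅) (z : α) : z ∈ C := by
  by_contra hz
  obtain ⟨m, -, hmz, hd⟩ := hC.exists_cut z hz
  exact hC.label_mem hmz hd

lemma IsCutSet.exists_prefix_label [Semigroup M] (hC : IsCutSet σ C U) (hσ : IsAdditive σ)
    (hY : IsGreedyCut σ C J Y) :
    ∃ τ : α → M, MapsTo τ Y J ∧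
      ∀ x ∈ Y, ∀ y ∈ Y, x < y → Disjoint (Ioc x y) C → τ x * σ x y = τ y := by
  choose! m hmC hlt hd using hC.exists_cut
  refine ⟨fun z => σ (m z) z, fun y hy => ?_, fun x hx y hy hxy hxyC => ?_⟩
  · have hyC := hY.notMem hy
    exact hY.label_mem (.inl (hmC y hyC)) hy (hlt y hyC) (hd y hyC)
  · have hxC := hY.notMem hx
    have hyC := hY.notMem hy
    have hmy : Disjoint (Ioc (m x) y) C := by
      rw [← Ioc_union_Ioc_eq_Ioc (hlt x hxC).le hxy.le]
      exact disjoint_union_left.2 ⟨hd x hxC, hxyC⟩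
    have hmm : m x = m y :=
      eq_of_disjoint_Ioc (hmC x hxC) (hmC y hyC) ((hlt x hxC).trans hxy) (hlt y hyC) hmy (hd y hyC)
    simp only [← hmm, hσ (m x) x y (hlt x hxC) hxy]

end CutSet

section Levels

variable {α M : Type*} [LinearOrder α] [Monoid M] {σ : α → α → M} {C Y : Set α} {U : Set M} {a : M}
  {x y z : α}

lemma IsAdditive.dvd (hσ : IsAdditive σ) (hxy : x < y) (hyz : y ≤ z) : σ x y ∣ σ x z := by
  rcases hyz.eq_or_lt with rfl | hyz
  · rfl
  · exact ⟨_, (hσ x y z hxy hyz).symm⟩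

lemma IsAdditive.jLE (hσ : IsAdditive σ) (hxy : x ≤ y) (hyz : y < z) : JLE (σ x z) (σ y z) := by
  rcases hxy.eq_or_lt with rfl | hxy
  · exact .refl _
  · exact hσ x y z hxy hyz ▸ mul_jLE_right _ _

lemma IsCutSet.union (hC : IsCutSet σ C U) (hσ : IsAdditive σ)
    (hmin : ∀ b ∈ U, JLE b a → b ∈ jClass a) (hY : IsGreedyCut σ C (jClass a) Y) :
    IsCutSet σ (C ∪ Y) (U \ jClass a) where
  label_mem x z hxz hd := by
    obtain ⟨y, hy, hyz, hyC, hyJ⟩ :=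
      hY.exists_label_notMem (disjoint_left.1 hd (right_mem_Ioc.2 hxz))
    have hyx : y ≤ x := not_lt.1 fun hxy => disjoint_left.1 hd ⟨hxy, hyz.le⟩ hy
    refine ⟨hC.label_mem hxz (disjoint_union_right.1 hd).1, fun hJ => hyJ ?_⟩
    exact hmin _ (hC.label_mem hyz hyC) ((hσ.jLE hyx hxz).trans hJ.2)
  exists_cut z hz := by
    obtain ⟨y, hy, hyz, hyC, hyJ⟩ := hY.exists_label_notMem hz
    refine ⟨y, hy, hyz, disjoint_union_right.2 ⟨hyC, disjoint_left.2 ?_⟩⟩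
    rintro w ⟨hyw, hwz⟩ hw
    have hywJ := hY.label_mem hy hw hyw (hyC.mono_left (Ioc_subset_Ioc_right hwz))
    exact hyJ (hmin _ (hC.label_mem hyz hyC) ((jLE_of_dvd (hσ.dvd hyw hwz)).trans hywJ.2))

variable [Finite M]

lemma IsGreedyCut.exists_rClass (hσ : IsAdditive σ) (hY : IsGreedyCut σ C (jClass a) Y) :
    ∃ d : α → M, MapsTo d Y (jClass a) ∧
      ∀ x ∈ Y, ∀ y ∈ Y, x < y → Disjoint (Ioc x y) C → σ x y ∈ rClass (d x) := by
  suffices h : ∀ x ∈ Y, ∃ d ∈ jClass a,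
      ∀ y ∈ Y, x < y → Disjoint (Ioc x y) C → σ x y ∈ rClass d by
    choose! d hdJ hd using h
    exact ⟨d, hdJ, hd⟩
  intro x hx
  have hJ (y) (hy : y ∈ Y) (hxy : x < y) (hd : Disjoint (Ioc x y) C) : σ x y ∈ jClass a :=
    hY.label_mem (.inr hx) hy hxy hd
  by_cases h : ∃ y ∈ Y, x < y ∧ Disjoint (Ioc x y) C
  · obtain ⟨y, hy, hxy, hyC⟩ := h
    refine ⟨σ x y, hJ y hy hxy hyC, fun y' hy' hxy' hyC' => ?_⟩
    rcases le_total y y' with hle | hle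
    · exact mem_rClass_of_dvd (hJ y hy hxy hyC) (hJ y' hy' hxy' hyC') (hσ.dvd hxy hle)
    · exact (mem_rClass_of_dvd (hJ y' hy' hxy' hyC') (hJ y hy hxy hyC) (hσ.dvd hxy' hle)).symm
  · exact ⟨a, self_mem_jClass a, fun y hy hxy hyC => absurd ⟨y, hy, hxy, hyC⟩ h⟩

lemma isHomogeneous_of_forall_mul_eq_left {L : Set α} {t d : M}
    (h : ∀ x ∈ L, ∀ y ∈ L, x < y → JLE (σ x y) t ∧ t * σ x y = t ∧ σ x y ∈ rClass d) :
    IsHomogeneous σ L := by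
  intro x hx y hy x' hx' y' hy' hxy hxy'
  obtain ⟨hJ, hfix, hr⟩ := h x hx y hy hxy
  obtain ⟨-, hfix', hr'⟩ := h x' hx' y' hy' hxy'
  exact ⟨hJ.eq_of_dvd hfix hfix' (hr.2.trans hr'.1), hJ.mul_eq_left hfix hfix⟩

lemma IsCutSet.exists_homogeneous_colouring (hC : IsCutSet σ C U) (hσ : IsAdditive σ)
    (hY : IsGreedyCut σ C (jClass a) Y) :
    ∃ c : α → M, MapsTo c Y (jClass a) ∧
      ∀ L ⊆ Y, (∀ x ∈ L, ∀ y ∈ L, Disjoint (Ioc x y) C) → (∀ x ∈ L, ∀ y ∈ L, c x = c y) →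
        IsHomogeneous σ L := by
  obtain ⟨τ, hτJ, hτ⟩ := hC.exists_prefix_label hσ hY
  obtain ⟨d, hdJ, hd⟩ := hY.exists_rClass hσ
  obtain ⟨g, hg, hginj⟩ := exists_rClass_encoding a
  refine ⟨fun y => g (τ y) (d y), fun y hy =>
    mem_jClass_trans (hdJ hy) (rClass_subset_jClass _ (hg _ (hτJ hy) _ (hdJ hy))), ?_⟩
  intro L hLY hLC hcol
  have hlt : ∀ x ∈ L, ∀ y ∈ L, x < y → τ x = τ y ∧ rClass (d x) = rClass (d y) := by
    intro x hx y hy hxy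
    have hdvd : τ x ∣ τ y := ⟨_, (hτ x (hLY hx) y (hLY hy) hxy (hLC x hx y hy)).symm⟩
    exact hginj _ (hτJ (hLY hx)) _ (hdJ (hLY hx)) _
      (mem_rClass_of_dvd (hτJ (hLY hx)) (hτJ (hLY hy)) hdvd) _ (hdJ (hLY hy)) (hcol x hx y hy)
  have hconst : ∀ x ∈ L, ∀ y ∈ L, τ x = τ y ∧ rClass (d x) = rClass (d y) := by
    intro x hx y hy
    rcases lt_trichotomy x y with hxy | rfl | hxy
    · exact hlt x hx y hy hxy
    · exact ⟨rfl, rfl⟩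
    · exact (hlt y hy x hx hxy).imp .symm .symm
  intro x hx
  refine isHomogeneous_of_forall_mul_eq_left (t := τ x) (d := d x) (fun y hy z hz hyz => ?_) hx
  have hyzJ := hY.label_mem (.inr (hLY hy)) (hLY hz) hyz (hLC y hy z hz)
  refine ⟨jLE_of_mem_jClass hyzJ (hτJ (hLY hx)), ?_, ?_⟩
  · rw [(hconst x hx y hy).1, hτ y (hLY hy) z (hLY hz) hyz (hLC y hy z hz), (hconst y hy z hz).1]
  · rw [(hconst x hx y hy).2]
    exact hd y (hLY hy) z (hLY hz) hyz (hLC y hy z hz)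

lemma exists_numbering {β : Type*} (J : Set β) (hJ : J.Finite) :
    ∃ e : β → ℕ, MapsTo e J (Icc 1 J.ncard) ∧ InjOn e J := by
  have hcard : J.encard ≤ (Icc 1 J.ncard).encard := by
    rw [← Finset.coe_Icc, encard_coe_eq_coe_finsetCard, Nat.card_Icc, ← hJ.cast_ncard_eq]
    simp
  exact hJ.exists_injOn_of_encard_le hcard

theorem IsCutSet.exists_isRamseyanOff [WellFoundedLT α] (hσ : IsAdditive σ)
    (hC : IsCutSet σ C U) (hU : ∀ b ∈ U, jClass b ⊆ U) :
    ∃ s : α → ℕ, MapsTo s Cᶜ (Icc 1 U.ncard) ∧ IsRamseyanOff σ C s := by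
  classical
  induction U using WellFoundedLT.induction generalizing C with
  | ind U ih =>
  rcases U.eq_empty_or_nonempty with rfl | hne
  · refine ⟨0, fun x hx => absurd (hC.mem_of_empty x) hx, fun k I _ hIC _ x hx => ?_⟩
    exact absurd (hC.mem_of_empty x) (disjoint_left.1 hIC hx.1)
  obtain ⟨a, haU, hmin⟩ := exists_minimal_jClass hne
  have hJU : jClass a ⊆ U := hU a haU
  obtain ⟨Y, hY⟩ := exists_isGreedyCut σ C (jClass a)
  obtain ⟨c, hcJ, hc⟩ := hC.exists_homogeneous_colouring hσ hY
  obtain ⟨e, heJ, heinj⟩ := exists_numbering (jClass a) (toFinite _)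
  have hU' : ∀ b ∈ U \ jClass a, jClass b ⊆ U \ jClass a := fun b hb c hc =>
    ⟨hU b hb.1 hc, fun hca => hb.2 (mem_jClass_trans hca hc.symm)⟩
  have hlt : U \ jClass a < U := sdiff_lt hJU (nonempty_of_mem (self_mem_jClass a)).ne_empty
  obtain ⟨s, hs, hram⟩ := ih _ hlt (hC.union hσ hmin hY) hU'
  have hcard := ncard_sdiff_add_ncard_of_subset hJU
  refine ⟨Y.piecewise (e ∘ c) fun x => (jClass a).ncard + s x, fun x hx => ?_,
    .piecewise (fun y hy => (heJ (hcJ hy)).2) ?_ (fun x hx => (hs hx).1) hram⟩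
  · by_cases hxY : x ∈ Y
    · rw [piecewise_eq_of_mem _ _ _ hxY]
      exact ⟨(heJ (hcJ hxY)).1, (heJ (hcJ hxY)).2.trans (ncard_le_ncard hJU)⟩
    · rw [piecewise_eq_of_notMem _ _ _ hxY]
      obtain ⟨hpos, hle⟩ := hs (show x ∈ (C ∪ Y)ᶜ from fun h => h.elim hx hxY)
      exact ⟨by omega, by omega⟩
  · intro k I hI hIC
    refine hc _ (fun x hx => hx.1.2) (fun x hx y hy => ?_) fun x hx y hy => ?_
    · exact hIC.mono_left (Ioc_subset_Icc_self.trans (hI.out hx.1.1 hy.1.1))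
    · exact heinj (hcJ hx.1.2) (hcJ hy.1.2) (hx.2.trans hy.2.symm)

end Levels

section Extension

variable {α S : Type*} [LinearOrder α]

lemma IsAdditive.map {T : Type*} [Semigroup S] [Semigroup T] {σ : α → α → S} (hσ : IsAdditive σ)
    (f : S →ₙ* T) : IsAdditive fun x y => f (σ x y) := fun x y z hxy hyz => by
  rw [← map_mul, hσ x y z hxy hyz]

lemma IsRamseyanOff.of_map {T : Type*} [Mul S] [Mul T] {σ : α → α → S} {C : Set α} {s : α → ℕ}
    {f : S →ₙ* T} (hf : Function.Injective f) (h : IsRamseyanOff (fun x y => f (σ x y)) C s) :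
    IsRamseyanOff σ C s := by
  intro k I hI hIC hk x hx y hy x' hx' y' hy' hxy hxy'
  obtain ⟨heq, hidem⟩ := h k I hI hIC hk hx hy hx' hy' hxy hxy'
  exact ⟨hf heq, hf ((map_mul f _ _).trans hidem)⟩

variable [Semigroup S]

lemma IsAdditive.exists_withBot_extension [OrderBot α] {σ : α → α → S} (hσ : IsAdditive σ) :
    ∃ ρ : WithBot α → WithBot α → S, IsAdditive ρ ∧ (fun x y : α => ρ x y) = σ := by
  classical
  let c : S := σ ⊥ ⊥
  let τ (y : α) : S := if y = ⊥ then c else c * σ ⊥ y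
  have hτ (y z : α) (hyz : y < z) : τ y * σ y z = τ z := by
    rcases eq_or_ne y ⊥ with rfl | hy
    · simp [τ, hyz.ne']
    · simp [τ, hy, (bot_le.trans_lt hyz).ne', mul_assoc, hσ ⊥ y z hy.bot_lt hyz]
  refine ⟨fun x y => y.recBotCoe c fun y => x.recBotCoe (τ y) fun x => σ x y, ?_, rfl⟩
  intro x y z hxy hyz
  lift z to α using (bot_le.trans_lt hyz).ne'
  lift y to α using (bot_le.trans_lt hxy).ne'
  induction x with
  | bot => exact hτ y z (WithBot.coe_lt_coe.1 hyz)
  | coe x => exact hσ x y z (WithBot.coe_lt_coe.1 hxy) (WithBot.coe_lt_coe.1 hyz)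

lemma IsRamseyanOff.isRamseyanSplit {ρ : WithBot α → WithBot α → S} {s : WithBot α → ℕ}
    (h : IsRamseyanOff ρ {⊥} s) : IsRamseyanSplit (fun x y : α => ρ x y) fun x : α => s x := by
  intro k x y x' y' hxy hxy' hall
  let I : Set (WithBot α) := ordConnectedComponent {z | z ≠ ⊥ ∧ k ≤ s z} x
  have hI : I ⊆ {z | z ≠ ⊥ ∧ k ≤ s z} := ordConnectedComponent_subset
  have hmem (b : α) (hb : b ∈ ({x, y, x', y'} : Set α)) : ↑b ∈ {z ∈ I | s z = k} := by
    obtain ⟨-, hsb, hk⟩ := hall x (by simp) b hb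
    refine ⟨fun z hz => ?_, hsb⟩
    have hz_ne : z ≠ ⊥ := ((WithBot.bot_lt_coe (min x b)).trans_le hz.1).ne'
    lift z to α using hz_ne
    exact ⟨WithBot.coe_ne_bot, hk z (WithBot.coe_le_coe.1 hz.1) (WithBot.coe_le_coe.1 hz.2)⟩
  exact h k I inferInstance (disjoint_singleton_right.2 fun hbot => (hI hbot).1 rfl)
    (fun z hz => (hI hz).2) (hmem x (by simp)) (hmem y (by simp)) (hmem x' (by simp))
    (hmem y' (by simp)) (WithBot.coe_lt_coe.2 hxy) (WithBot.coe_lt_coe.2 hxy')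

lemma isCutSet_singleton_bot {M : Type*} [OrderBot α] {σ : α → α → M} {U : Set M}
    (hU : ∀ x y, σ x y ∈ U) : IsCutSet σ {⊥} U where
  label_mem x y _ _ := hU x y
  exists_cut z hz := ⟨⊥, rfl, bot_lt_iff_ne_bot.2 hz, by simp⟩

lemma jClass_coe_subset_range (a : S) :
    jClass (a : WithOne S) ⊆ range ((↑) : S → WithOne S) := by
  rintro _ ⟨-, p, q, rfl⟩
  cases p using WithOne.recOneCoe <;> cases q using WithOne.recOneCoe <;> exact ⟨_, rfl⟩

end Extension

theorem factorisation_split_finite_general {α S : Type*} [LinearOrder α] [WellFoundedLT α]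
    [Semigroup S] [Finite S] (σ : α → α → S) (hσ : IsAdditive σ) :
    ∃ s : α → ℕ, (∀ x, 1 ≤ s x ∧ s x ≤ Nat.card S) ∧ IsRamseyanSplit σ s := by
  rcases isEmpty_or_nonempty α with hα | hα
  · exact ⟨0, fun x => isEmptyElim x, fun _ x => isEmptyElim x⟩
  let _ : OrderBot α := WellFoundedLT.toOrderBot α
  have : Finite (WithOne S) := inferInstanceAs (Finite (Option S))
  obtain ⟨ρ, hρ, rfl⟩ := hσ.exists_withBot_extension
  have hcut : IsCutSet (fun x y => WithOne.coeMulHom (ρ x y)) {⊥} (range ((↑) : S → WithOne S)) :=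
    isCutSet_singleton_bot fun x y => mem_range_self (ρ x y)
  obtain ⟨s, hs, hram⟩ := hcut.exists_isRamseyanOff (hρ.map WithOne.coeMulHom)
    (forall_mem_range.2 jClass_coe_subset_range)
  rw [ncard_range_of_injective WithOne.coe_injective] at hs
  exact ⟨fun x => s x, fun x => hs WithBot.coe_ne_bot,
    (hram.of_map WithOne.coe_injective).isRamseyanSplit⟩

theorem factorisation_split_finite {α S : Type*} [LinearOrder α] [Fintype α]
    [Semigroup S] [Fintype S] (σ : α → α → S) (hσ : IsAdditive σ) :
    ∃ s : α → ℕ, (∀ x, 1 ≤ s x ∧ s x ≤ Fintype.card S) ∧ IsRamseyanSplit σ s := by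
  rw [← Nat.card_eq_fintype_card]
  exact factorisation_split_finite_general σ hσ
end

section
/- Let S be a finite semigroup, α an ordinal, and σ an additive labelling from α to S. Then there exists a forward ramseyan split of (α,σ) of height at most |S|. Moreover the split can be chosen deterministically: there is an assignment (α,σ) ↦ s_{α,σ} such that for additive labellings σ, σ' over ordinals α, α' and any β < min(α,α'), if σ restricted to [0,β] equals σ' restricted to [0,β], then s_{α,σ}(β) = s_{α',σ'}(β). -/
open Ordinal

/-- `σ` is an additive labelling over the ordinal `α` (its values are relevant
only on pairs of ordinals below `α`). -/
def AdditiveOn {S : Type} [Semigroup S] (α : Ordinal) (σ : Ordinal → Ordinal → S) : Prop :=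
  ∀ x y z : Ordinal, x < y → y < z → z < α → σ x y * σ y z = σ x z

/-- `x` and `y` are `k`-neighbours (below `α`) for the split `s`. -/
def KNeighboursOn (α : Ordinal) (s : Ordinal → ℕ) (k : ℕ) (x y : Ordinal) : Prop :=
  x < α ∧ y < α ∧ s x = k ∧ s y = k ∧ ∀ z, min x y ≤ z → z ≤ max x y → k ≤ s z

/-- A split is forward ramseyan: for pairwise `k`-neighbours `x < y` and
`x' < y'`, `σ(x,y) = σ(x,y)·σ(x',y')`. -/
def ForwardRamseyan {S : Type} [Semigroup S] (α : Ordinal)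
    (σ : Ordinal → Ordinal → S) (s : Ordinal → ℕ) : Prop :=
  ∀ k : ℕ, ∀ x y x' y' : Ordinal, x < y → x' < y' →
    (∀ a ∈ ({x, y, x', y'} : Set Ordinal), ∀ b ∈ ({x, y, x', y'} : Set Ordinal),
      KNeighboursOn α s k a b) →
    σ x y = σ x y * σ x' y'

/-! Write `rank a` for the size of the principal left ideal `S¹a`; it does not increase under right
multiplication. Give each position `y`, in order, the least level `n` such that
`rank (σ x y) ≤ n` for every earlier `x` that is visible from `y` at height `n`: the level of `x` is
at most `n`, and all levels strictly in between are at least `n`. The base of `y` is the last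
earlier position of smaller level, a virtual position being added at the bottom so that it always
exists. If `a` is the label from the base to `y`, then `rank a` is exactly the level of `y`, and
the split colours `y` by `a` itself, elements of larger rank receiving larger colours.

Neighbours `x < y` of colour `a` have the same base, so `a * σ x y = a`, and they see each other, so
`rank (σ x y) ≤ rank a`. These two facts give `S¹ (σ x y) = S¹ a`, so that every `v` with
`a * v = a` also satisfies `σ x y * v = σ x y`; the label `v` of any other pair of neighbours of
the same colour is of this kind.
-/

open Set

section LeftRank

variable {S : Type*} [Semigroup S]

/-- The principal left ideal `S¹a`, written without adjoining an identity to `S`. -/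
def principalLeftIdeal (a : S) : Set S :=
  insert a (range (· * a))

theorem mul_eq_self_of_mem_principalLeftIdeal {a u v : S} (hu : u ∈ principalLeftIdeal a)
    (hv : a * v = a) : u * v = u := by
  obtain rfl | ⟨c, rfl⟩ := hu
  · exact hv
  · rw [mul_assoc, hv]

theorem principalLeftIdeal_mul_subset (a u : S) :
    principalLeftIdeal (a * u) ⊆ principalLeftIdeal u := by
  rintro _ (rfl | ⟨c, rfl⟩)
  · exact Or.inr ⟨a, rfl⟩
  · exact Or.inr ⟨c * a, mul_assoc c a u⟩

theorem principalLeftIdeal_mul_subset_image (a u : S) :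
    principalLeftIdeal (a * u) ⊆ (· * u) '' principalLeftIdeal a := by
  rintro _ (rfl | ⟨c, rfl⟩)
  · exact ⟨a, Or.inl rfl, rfl⟩
  · exact ⟨c * a, Or.inr ⟨c, rfl⟩, mul_assoc c a u⟩

/-- The size of the principal left ideal of `a`, which numbers the `𝓛`-classes of a finite
semigroup from the bottom up (incomparable classes may share a number). -/
noncomputable def leftRank (a : S) : ℕ :=
  (principalLeftIdeal a).ncard

variable [Finite S]

theorem leftRank_pos (a : S) : 0 < leftRank a :=
  (ncard_pos (toFinite _)).2 ⟨a, Or.inl rfl⟩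

theorem leftRank_le_card (a : S) : leftRank a ≤ Nat.card S :=
  ncard_le_card _

theorem leftRank_mul_le (a u : S) : leftRank (a * u) ≤ leftRank a :=
  (ncard_le_ncard (principalLeftIdeal_mul_subset_image a u)).trans ncard_image_le

theorem principalLeftIdeal_eq_of_mul_eq_self {a u : S} (hau : a * u = a)
    (hrank : leftRank u ≤ leftRank a) : principalLeftIdeal a = principalLeftIdeal u := by
  have hsub := principalLeftIdeal_mul_subset a u
  rw [hau] at hsub
  exact eq_of_subset_of_ncard_le hsub hrank

theorem mul_eq_self_of_leftRank_le {a u v : S} (hu : a * u = a) (hv : a * v = a)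
    (hrank : leftRank u ≤ leftRank a) : u * v = u := by
  refine mul_eq_self_of_mem_principalLeftIdeal ?_ hv
  rw [principalLeftIdeal_eq_of_mul_eq_self hu hrank]
  exact Or.inl rfl

end LeftRank

section GreedyLevel

variable {P : Type*} [Preorder P] {d d' : P → P → ℕ} {N m : ℕ} {x y β : P}

/-- The level of a position of a well-founded order whose pairs `z < β` carry weights `d z β`: the
least `n` bounding `d z β` for every `z < β` visible from `β` at height `n`, i.e. such that `z` has
level at most `n` and the levels strictly between `z` and `β` are at least `n`. -/
noncomputable def greedyLevel [WellFoundedLT P] (d : P → P → ℕ) (β : P) : ℕ :=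
  sInf {n | ∀ z, z < β → greedyLevel d z ≤ n → (∀ w ∈ Ioo z β, n ≤ greedyLevel d w) → d z β ≤ n}
termination_by wellFounded_lt.wrap β
decreasing_by
  · assumption
  · exact And.right ‹_ ∈ Ioo _ _›

variable [WellFoundedLT P]

theorem weight_le_greedyLevel (hd : ∀ z, d z y ≤ N) (hxy : x < y)
    (hx : greedyLevel d x ≤ greedyLevel d y)
    (hbetween : ∀ w ∈ Ioo x y, greedyLevel d y ≤ greedyLevel d w) :
    d x y ≤ greedyLevel d y := by
  have hmem := Nat.sInf_mem (s := {n | ∀ z, z < y → greedyLevel d z ≤ n →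
    (∀ w ∈ Ioo z y, n ≤ greedyLevel d w) → d z y ≤ n}) ⟨N, fun z _ _ _ => hd z⟩
  rw [← greedyLevel.eq_def] at hmem
  exact hmem x hxy hx hbetween

theorem exists_lt_weight_of_lt_greedyLevel (hm : m < greedyLevel d β) :
    ∃ z < β, greedyLevel d z ≤ m ∧ (∀ w ∈ Ioo z β, m ≤ greedyLevel d w) ∧ m < d z β := by
  rw [greedyLevel] at hm
  simpa only [mem_ofPred_eq, not_forall, not_le, exists_prop] using Nat.notMem_of_lt_sInf hm

theorem greedyLevel_pos (hN : ∀ z, d z β ≤ N) (hd : ∀ z, 0 < d z β) (hβ : ¬IsMin β) :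
    0 < greedyLevel d β := by
  by_contra! hzero
  obtain ⟨x, hx⟩ := not_isMin_iff.1 hβ
  obtain ⟨z, hz, hz0⟩ : ∃ z < β, greedyLevel d z = 0 := by
    by_contra! hne
    obtain ⟨z, hzx, hz0, -⟩ :=
      exists_lt_weight_of_lt_greedyLevel (Nat.pos_of_ne_zero (hne x hx))
    exact hne z (hzx.trans hx) (Nat.le_zero.1 hz0)
  have := weight_le_greedyLevel hN hz (by omega) (by omega)
  have := hd z
  omega

theorem greedyLevel_congr (h : ∀ x y, x < y → y ≤ β → d x y = d' x y) :
    greedyLevel d β = greedyLevel d' β := by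
  induction β using WellFoundedLT.induction with
  | ind β ih =>
    have hlt : ∀ z < β, greedyLevel d z = greedyLevel d' z := fun z hz =>
      ih z hz fun x y hxy hy => h x y hxy (hy.trans hz.le)
    rw [greedyLevel, greedyLevel]
    congr 1
    ext n
    refine forall₂_congr fun z hz => ?_
    have hbetween : (∀ w ∈ Ioo z β, n ≤ greedyLevel d w) ↔ ∀ w ∈ Ioo z β, n ≤ greedyLevel d' w :=
      forall₂_congr fun w hw => by rw [hlt w hw.2]
    rw [hlt z hz, h z β hz le_rfl, hbetween]

end GreedyLevel

section GreedyBase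

variable {P : Type*} [LinearOrder P] [WellFoundedLT P] {d d' : P → P → ℕ} {N : ℕ} {x y β : P}

/-- The last position before `β` of smaller level, if there is one. Taking instead the least `z`
such that no position strictly between `z` and `β` has smaller level makes this total, but the
value need not be below `β` in general. -/
noncomputable def greedyBase (d : P → P → ℕ) (β : P) : P :=
  wellFounded_lt.min {z | ∀ w ∈ Ioo z β, greedyLevel d β ≤ greedyLevel d w}
    ⟨β, fun _ hw => absurd hw.1 hw.2.not_gt⟩

theorem greedyLevel_le_of_mem_Ioo_greedyBase {w : P} (hw : w ∈ Ioo (greedyBase d β) β) :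
    greedyLevel d β ≤ greedyLevel d w :=
  wellFounded_lt.min_mem {z | ∀ w ∈ Ioo z β, greedyLevel d β ≤ greedyLevel d w} _ w hw

theorem greedyBase_le {z : P} (hz : ∀ w ∈ Ioo z β, greedyLevel d β ≤ greedyLevel d w) :
    greedyBase d β ≤ z :=
  wellFounded_lt.min_le (s := {z | ∀ w ∈ Ioo z β, greedyLevel d β ≤ greedyLevel d w}) hz

theorem greedyBase_eq {z : P} (hzβ : z < β) (hlevel : greedyLevel d z < greedyLevel d β)
    (hz : ∀ w ∈ Ioo z β, greedyLevel d β ≤ greedyLevel d w) : greedyBase d β = z :=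
  (greedyBase_le hz).antisymm <| le_of_not_gt fun hlt =>
    (greedyLevel_le_of_mem_Ioo_greedyBase ⟨hlt, hzβ⟩).not_gt hlevel

theorem greedyBase_congr (h : ∀ x y, x < y → y ≤ β → d x y = d' x y) :
    greedyBase d β = greedyBase d' β := by
  have hlevel : ∀ w ≤ β, greedyLevel d w = greedyLevel d' w := fun w hw =>
    greedyLevel_congr fun x y hxy hy => h x y hxy (hy.trans hw)
  unfold greedyBase
  congr 1
  ext z
  exact forall₂_congr fun w hw => by rw [hlevel β le_rfl, hlevel w hw.2.le]

theorem greedyBase_eq_greedyBase (hxy : x ≤ y) (hlevel : greedyLevel d x = greedyLevel d y)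
    (hbetween : ∀ w ∈ Icc x y, greedyLevel d y ≤ greedyLevel d w) :
    greedyBase d x = greedyBase d y := by
  apply le_antisymm
  · refine greedyBase_le fun w hw => hlevel.trans_le ?_
    exact greedyLevel_le_of_mem_Ioo_greedyBase ⟨hw.1, hw.2.trans_le hxy⟩
  · refine greedyBase_le fun w hw => ?_
    obtain hwx | hxw := lt_or_ge w x
    · exact hlevel.symm.trans_le (greedyLevel_le_of_mem_Ioo_greedyBase ⟨hw.1, hwx⟩)
    · exact hbetween w ⟨hxw, hw.2.le⟩

theorem greedyBase_lt_and_weight_eq (hN : ∀ x y, d x y ≤ N)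
    (hanti : ∀ x y, x < y → y < β → d x β ≤ d x y) (hpos : 0 < greedyLevel d β) :
    greedyBase d β < β ∧ d (greedyBase d β) β = greedyLevel d β := by
  obtain ⟨m, hm⟩ := Nat.exists_eq_succ_of_ne_zero hpos.ne'
  obtain ⟨z, hzβ, hzm, hbetween, hweight⟩ :=
    exists_lt_weight_of_lt_greedyLevel (d := d) (β := β) (m := m) (by omega)
  -- A `w` violating this has level exactly `m` and sees `z`, so `d z β ≤ d z w ≤ m`.
  have hstrict : ∀ w ∈ Ioo z β, greedyLevel d β ≤ greedyLevel d w := by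
    intro w hw
    by_contra! hlt
    have hwm : greedyLevel d w = m := le_antisymm (by omega) (hbetween w hw)
    have hzw : d z w ≤ greedyLevel d w :=
      weight_le_greedyLevel (hN · w) hw.1 (hzm.trans_eq hwm.symm) fun v hv =>
        hwm.trans_le (hbetween v ⟨hv.1, hv.2.trans hw.2⟩)
    have := hanti z w hw.1 hw.2
    omega
  have hle := weight_le_greedyLevel (hN · β) hzβ (by omega) hstrict
  rw [greedyBase_eq hzβ (by omega) hstrict]
  exact ⟨hzβ, by omega⟩

end GreedyBase

section AdditiveUpTo

variable {P : Type*} [Preorder P] {S : Type*} [Mul S] {τ : P → P → S} {x y : P}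

/-- `τ` is an additive labelling over the closed initial segment of `P` ending at `y`. -/
def AdditiveUpTo (τ : P → P → S) (y : P) : Prop :=
  ∀ a b c, a < b → b < c → c ≤ y → τ a b * τ b c = τ a c

theorem AdditiveUpTo.mono (h : AdditiveUpTo τ y) (hxy : x ≤ y) : AdditiveUpTo τ x :=
  fun a b c hab hbc hc => h a b c hab hbc (hc.trans hxy)

end AdditiveUpTo

section BaseLabel

variable {P : Type*} [LinearOrder P] {S : Type*} [Semigroup S] {τ τ' : P → P → S} {x y β : P}

/-- The weights from which the levels and bases of a labelling `τ` are computed. -/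
noncomputable def intervalRank (τ : P → P → S) (x y : P) : ℕ :=
  leftRank (τ x y)

variable [WellFoundedLT P]

/-- The label of the interval from the base of `β` to `β`: the element of `S` by which the split
colours `β`. -/
noncomputable def baseLabel (τ : P → P → S) (β : P) : S :=
  τ (greedyBase (intervalRank τ) β) β

variable [Finite S]

theorem greedyBase_lt_and_leftRank_baseLabel (hτ : AdditiveUpTo τ β) (hβ : ¬IsMin β) :
    greedyBase (intervalRank τ) β < β ∧
      leftRank (baseLabel τ β) = greedyLevel (intervalRank τ) β := by
  refine greedyBase_lt_and_weight_eq (fun x y => leftRank_le_card (τ x y)) (fun x y hxy hy => ?_)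
    (greedyLevel_pos (fun x => leftRank_le_card (τ x β)) (fun x => leftRank_pos (τ x β)) hβ)
  rw [intervalRank, ← hτ x y β hxy hy le_rfl]
  exact leftRank_mul_le _ _

theorem baseLabel_congr (hτ : AdditiveUpTo τ β) (hβ : ¬IsMin β)
    (h : ∀ x y, x < y → y ≤ β → τ x y = τ' x y) : baseLabel τ β = baseLabel τ' β := by
  have hbase : greedyBase (intervalRank τ) β = greedyBase (intervalRank τ') β :=
    greedyBase_congr fun x y hxy hy => congrArg leftRank (h x y hxy hy)
  rw [baseLabel, baseLabel, ← hbase]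
  exact h _ _ (greedyBase_lt_and_leftRank_baseLabel hτ hβ).1 le_rfl

theorem baseLabel_mul_eq (hτ : AdditiveUpTo τ y) (hx : ¬IsMin x) (hxy : x < y)
    (hlevel : greedyLevel (intervalRank τ) x = greedyLevel (intervalRank τ) y)
    (hbetween : ∀ w ∈ Icc x y,
      greedyLevel (intervalRank τ) y ≤ greedyLevel (intervalRank τ) w) :
    baseLabel τ x * τ x y = baseLabel τ y := by
  have hlt := (greedyBase_lt_and_leftRank_baseLabel (hτ.mono hxy.le) hx).1
  rw [baseLabel, baseLabel, ← greedyBase_eq_greedyBase hxy.le hlevel hbetween]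
  exact hτ _ _ _ hlt hxy le_rfl

theorem mul_eq_self_and_leftRank_le_of_baseLabel_eq (hτ : AdditiveUpTo τ y) (hx : ¬IsMin x)
    (hxy : x < y) (hlabel : baseLabel τ x = baseLabel τ y)
    (hbetween : ∀ w ∈ Icc x y, leftRank (baseLabel τ y) ≤ leftRank (baseLabel τ w)) :
    baseLabel τ y * τ x y = baseLabel τ y ∧ leftRank (τ x y) ≤ leftRank (baseLabel τ y) := by
  have hrank : ∀ w ∈ Icc x y,
      leftRank (baseLabel τ w) = greedyLevel (intervalRank τ) w := fun w hw =>
    (greedyBase_lt_and_leftRank_baseLabel (hτ.mono hw.2) fun h => hx (h.mono hw.1)).2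
  have hrank_x := hrank x (left_mem_Icc.2 hxy.le)
  have hrank_y := hrank y (right_mem_Icc.2 hxy.le)
  have hlevel : greedyLevel (intervalRank τ) x = greedyLevel (intervalRank τ) y := by
    rw [← hrank_x, ← hrank_y, hlabel]
  have hlevel_le : ∀ w ∈ Icc x y,
      greedyLevel (intervalRank τ) y ≤ greedyLevel (intervalRank τ) w := fun w hw => by
    rw [← hrank w hw, ← hrank_y]
    exact hbetween w hw
  constructor
  · nth_rw 1 [← hlabel]
    exact baseLabel_mul_eq hτ hx hxy hlevel hlevel_le
  · rw [hrank_y]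
    exact weight_le_greedyLevel (fun z => leftRank_le_card (τ z y)) hxy hlevel.le fun w hw =>
      hlevel_le w (Ioo_subset_Icc_self hw)

end BaseLabel

section PrependBot

variable {P : Type*} [PartialOrder P] [OrderBot P] {S : Type*} {β : P}

open Classical in
/-- The labelling `σ` extended by a virtual position `⊥` below all others, the label from `⊥` to
the first position of `P` being `e`. Labels of pairs that are not increasing are junk. -/
noncomputable def prependBot [Mul S] (e : S) (σ : P → P → S) : WithBot P → WithBot P → S
  | (x : P), (y : P) => σ x y
  | ⊥, (y : P) => if y = ⊥ then e else e * σ ⊥ y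
  | _, ⊥ => e

theorem additiveUpTo_prependBot [Semigroup S] {σ : P → P → S} (hσ : AdditiveUpTo σ β) (e : S) :
    AdditiveUpTo (prependBot e σ) (β : WithBot P) := by
  intro x y z hxy hyz hz
  lift z to P using (bot_le.trans_lt hyz).ne'
  lift y to P using (bot_le.trans_lt hxy).ne'
  rw [WithBot.coe_lt_coe] at hyz
  rw [WithBot.coe_le_coe] at hz
  induction x using WithBot.recBotCoe with
  | coe x => exact hσ x y z (WithBot.coe_lt_coe.1 hxy) hyz hz
  | bot =>
    have hz0 : z ≠ ⊥ := (bot_le.trans_lt hyz).ne'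
    obtain rfl | hy0 := eq_or_ne y ⊥
    · simp [prependBot, hz0]
    · simp [prependBot, hz0, hy0, mul_assoc, hσ ⊥ y z (bot_lt_iff_ne_bot.2 hy0) hyz hz]

theorem prependBot_congr [Mul S] {σ σ' : P → P → S}
    (h : ∀ x y, x < y → y ≤ β → σ x y = σ' x y) (e : S) (x y : WithBot P) (hxy : x < y)
    (hy : y ≤ β) : prependBot e σ x y = prependBot e σ' x y := by
  lift y to P using (bot_le.trans_lt hxy).ne'
  rw [WithBot.coe_le_coe] at hy
  induction x using WithBot.recBotCoe with
  | coe x => exact h x y (WithBot.coe_lt_coe.1 hxy) hy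
  | bot =>
    obtain rfl | hy0 := eq_or_ne y ⊥
    · simp [prependBot]
    · simp [prependBot, hy0, h ⊥ y (bot_lt_iff_ne_bot.2 hy0) hy]

end PrependBot

theorem exists_injective_numbering {ι : Type*} [Fintype ι] {γ : Type*} [LinearOrder γ]
    (r : ι → γ) :
    ∃ ρ : ι → ℕ, Function.Injective ρ ∧ (∀ a, 1 ≤ ρ a ∧ ρ a ≤ Fintype.card ι) ∧
      ∀ a b, ρ a ≤ ρ b → r a ≤ r b := by
  let e := Fintype.equivFin ι
  let p := Tuple.sort (r ∘ e.symm)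
  refine ⟨fun a => p.symm (e a) + 1, fun a b hab => ?_,
    fun a => ⟨Nat.succ_pos _, (p.symm (e a)).is_lt⟩, fun a b hab => ?_⟩
  · simpa [Fin.val_inj] using hab
  · simpa [p] using Tuple.monotone_sort (r ∘ e.symm) (a := p.symm (e a)) (b := p.symm (e b))
      (by simpa using hab)

section OrdinalSplit

variable {S : Type} [Semigroup S] {α : Ordinal} {σ : Ordinal → Ordinal → S}

theorem AdditiveOn.additiveUpTo (hσ : AdditiveOn α σ) {β : Ordinal} (hβ : β < α) :
    AdditiveUpTo σ β :=
  fun x y z hxy hyz hz => hσ x y z hxy hyz (hz.trans_lt hβ)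

variable [Finite S] {ρ : S → ℕ}

theorem KNeighboursOn.mul_eq_self_and_leftRank_le (hinj : Function.Injective ρ)
    (hmono : ∀ a b, ρ a ≤ ρ b → leftRank a ≤ leftRank b) {e : S} (hσ : AdditiveOn α σ) {k : ℕ}
    {x y : Ordinal} (hxy : x < y)
    (h : KNeighboursOn α (fun β => ρ (baseLabel (prependBot e σ) β)) k x y) {a : S}
    (ha : ρ a = k) : a * σ x y = a ∧ leftRank (σ x y) ≤ leftRank a := by
  obtain ⟨-, hy, hx, hk, hbetween⟩ := h
  rw [min_eq_left hxy.le, max_eq_right hxy.le] at hbetween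
  obtain rfl : baseLabel (prependBot e σ) y = a := hinj (hk.trans ha.symm)
  refine mul_eq_self_and_leftRank_le_of_baseLabel_eq
    (additiveUpTo_prependBot (hσ.additiveUpTo hy) e) (by simp)
    (WithBot.coe_lt_coe.2 hxy) (hinj (hx.trans hk.symm)) fun w hw => hmono _ _ (hk.trans_le ?_)
  lift w to Ordinal using ((WithBot.bot_lt_coe x).trans_le hw.1).ne'
  exact hbetween w (WithBot.coe_le_coe.1 hw.1) (WithBot.coe_le_coe.1 hw.2)

theorem AdditiveOn.forwardRamseyan_baseLabel (hσ : AdditiveOn α σ) (hinj : Function.Injective ρ)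
    (hmono : ∀ a b, ρ a ≤ ρ b → leftRank a ≤ leftRank b) (e : S) :
    ForwardRamseyan α σ fun β => ρ (baseLabel (prependBot e σ) β) := by
  intro k x y x' y' hxy hxy' hk
  have hneighbours := hk x (by simp) y (by simp)
  have hneighbours' := hk x' (by simp) y' (by simp)
  have hcolour := hneighbours.2.2.1
  obtain ⟨hmul, hrank⟩ := hneighbours.mul_eq_self_and_leftRank_le hinj hmono hσ hxy hcolour
  obtain ⟨hmul', -⟩ := hneighbours'.mul_eq_self_and_leftRank_le hinj hmono hσ hxy' hcolour
  exact (mul_eq_self_of_leftRank_le hmul hmul' hrank).symm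

end OrdinalSplit

theorem deterministic_forward_ramseyan_split {S : Type} [Semigroup S] [Fintype S] :
    ∃ F : Ordinal → (Ordinal → Ordinal → S) → Ordinal → ℕ,
      (∀ (α : Ordinal) (σ : Ordinal → Ordinal → S), AdditiveOn α σ →
        (∀ β, β < α → 1 ≤ F α σ β ∧ F α σ β ≤ Fintype.card S) ∧
        ForwardRamseyan α σ (F α σ)) ∧
      (∀ (α α' : Ordinal) (σ σ' : Ordinal → Ordinal → S) (β : Ordinal),
        β < α → β < α' →
        AdditiveOn α σ → AdditiveOn α' σ' →
        (∀ x y : Ordinal, x < y → y ≤ β → σ x y = σ' x y) →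
        F α σ β = F α' σ' β) := by
  obtain hS | ⟨⟨e⟩⟩ := isEmpty_or_nonempty S
  · exact ⟨fun _ _ _ => 0, fun _ σ => (hS.false (σ 0 0)).elim,
      fun _ _ σ => (hS.false (σ 0 0)).elim⟩
  obtain ⟨ρ, hinj, hbound, hmono⟩ := exists_injective_numbering (leftRank (S := S))
  refine ⟨fun _ σ β => ρ (baseLabel (prependBot e σ) β), fun α σ hσ =>
    ⟨fun β _ => hbound _, hσ.forwardRamseyan_baseLabel hinj hmono e⟩, ?_⟩
  intro α α' σ σ' β hβ _ hσ _ hagree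
  exact congrArg ρ (baseLabel_congr (additiveUpTo_prependBot (hσ.additiveUpTo hβ) e) (by simp)
    (prependBot_congr hagree e))
end
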